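/- For every μ₁ ∈ ℝ, the free energy limit lim_{N→∞} (1/N) · ln( e^{−3μ₁N/2} · Θ_N(μ₁) ) exists and equals F(μ₁) = −(3/2)μ₁ + (1/2)·ln(27/2) + (1/2)·sup_{0 ≤ β < 1} ∫₀^β ln( 6 e^{−μ₁} g(t) ) dt, where g(t) = (1 + 4t/(3(1−t))) / (1 + 2t/(1−t))². Moreover the supremum equals 0 if and only if μ₁ ≥ ln 6; in particular F(μ₁) = −(3/2)μ₁ + (1/2)·ln(27/2) for μ₁ ≥ ln 6 and F(μ₁) is strictly larger than this value for μ₁ < ln 6 (a phase transition at the critical point μ_{1,cr} = ln 6). -/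

import Mathlib

open Finset Filter

/-- `C₀ N m` is the number of rooted triangulations of the disk with `N` triangles and
`m` boundary edges. -/
noncomputable def C₀ (N m : ℕ) : ℝ :=
  if 2 ≤ m ∧ m ≤ N ∧ N % 2 = m % 2 then
    (2 : ℝ) ^ ((N - m) / 2 + 2) *
      (Nat.factorial (2 * m + 3 * ((N - m) / 2) - 1) : ℝ) *
      (Nat.factorial (2 * m - 3) : ℝ) /
      ((Nat.factorial ((N - m) / 2 + 1) : ℝ) *
        (Nat.factorial (2 * m + 2 * ((N - m) / 2)) : ℝ) *
        (Nat.factorial (m - 2) : ℝ) ^ 2)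
  else 0

/-- The partition function `Θ_N(μ₁) = Σ_m e^{−μ₁ m/2} C₀(N,m)`. -/
noncomputable def Θ (μ₁ : ℝ) (N : ℕ) : ℝ :=
  ∑ m ∈ Finset.range (N + 1), Real.exp (-μ₁ * m / 2) * C₀ N m

/-- `g(t) = (1 + 4t/(3(1−t))) / (1 + 2t/(1−t))²`. -/
noncomputable def g (t : ℝ) : ℝ :=
  (1 + 4 * t / (3 * (1 - t))) / (1 + 2 * t / (1 - t)) ^ 2

/-- The supremum over `0 ≤ β < 1` of `∫₀^β ln(6 e^{−μ₁} g(t)) dt`. -/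
noncomputable def supTerm (μ₁ : ℝ) : ℝ :=
  ⨆ β : Set.Ico (0 : ℝ) 1, ∫ t in (0 : ℝ)..(β : ℝ), Real.log (6 * Real.exp (-μ₁) * g t)

/-- The free energy `F(μ₁) = −(3/2)μ₁ + (1/2)·ln(27/2) + (1/2)·sup_{0≤β<1} ∫₀^β ln(6e^{−μ₁}g(t))dt`. -/
noncomputable def freeEnergy (μ₁ : ℝ) : ℝ :=
  -(3 / 2) * μ₁ + (1 / 2) * Real.log (27 / 2) + (1 / 2) * supTerm μ₁

/-! The logarithm of a term of `Θ` is, by Stirling's formula `log n! = n log n - n + O(log n)`,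
equal to `N · rate μ₁ (m / N) + O(log N)` uniformly in `m` (`log_term_bound`), because the arguments
of the factorials in `C₀` balance so that all contributions `N log N` and `N` cancel. As `Θ` has at
most `N + 1` terms, all nonnegative, Laplace's principle gives `(1/N) log Θ → max_{[0,1]} rate μ₁`:
the upper bound is the maximum times the number of terms (`log_Θ_upper`), the lower bound a single
term with `m / N` close to a near-maximizer (`log_Θ_lower`, `exists_seq`).

The derivative of `rate μ₁` is `(1/2) log (6 e^{-μ₁} g)` (`rate_hasDerivAt`), so this maximum
is `rate μ₁ 0 + supTerm μ₁ / 2`, with `rate μ₁ 0 = (1/2) log (27/2)`. Finally `0 < g ≤ g 0 = 1`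
on `[0,1)`, so that `rate μ₁` is maximal at `0` when `6 e^{-μ₁} ≤ 1`, while it has positive slope
at `0` when `6 e^{-μ₁} > 1`. -/

/-- The exponential growth rate, as `N → ∞`, of the term `e^{−μ₁ m/2} C₀(N,m)` with `m = βN`. It is
the entropy of the factorials in `C₀`; the contributions `2β ln(2β) − 2 · β ln β` of `(2m−3)!` and
`((m−2)!)²` have been combined into `2β ln 2`, which makes `rate μ₁` smooth at `β = 0`. -/
noncomputable def rate (μ₁ β : ℝ) : ℝ :=
  (1 - β) / 2 * Real.log 2 + (3 + β) / 2 * Real.log ((3 + β) / 2) + 2 * β * Real.log 2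
    - (1 - β) / 2 * Real.log ((1 - β) / 2) - (1 + β) * Real.log (1 + β) - μ₁ * β / 2

/-! ### Stirling-type bounds -/

lemma stirling_bounds (n : ℕ) :
    (n : ℝ) * Real.log n - n ≤ Real.log (Nat.factorial n) ∧
    Real.log (Nat.factorial n) ≤ (n : ℝ) * Real.log n - n + Real.log (n + 1) + 1 := by
  -- With `log n` in place of `log (n + 1)` the induction step of the upper bound reduces to
  -- `1 ≤ (n + 1) * log ((n + 1) / n)`.
  suffices h : (n : ℝ) * Real.log n - n ≤ Real.log (Nat.factorial n) ∧
      Real.log (Nat.factorial n) ≤ (n : ℝ) * Real.log n - n + Real.log n + 1 by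
    refine ⟨h.1, h.2.trans ?_⟩
    rcases Nat.eq_zero_or_pos n with rfl | hn
    · simp
    · have : Real.log n ≤ Real.log (n + 1) :=
        Real.log_le_log (by exact_mod_cast hn) (by linarith)
      linarith
  induction n with
  | zero => simp
  | succ n ih =>
    have hf : Real.log (Nat.factorial (n + 1)) =
        Real.log ((n : ℝ) + 1) + Real.log (Nat.factorial n) := by
      rw [Nat.factorial_succ]
      push_cast
      exact Real.log_mul (by positivity) (by exact_mod_cast Nat.factorial_ne_zero n)
    rcases Nat.eq_zero_or_pos n with rfl | hn
    · simp
    have hn' : (0 : ℝ) < n := by exact_mod_cast hn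
    have hd : Real.log (((n : ℝ) + 1) / n) = Real.log ((n : ℝ) + 1) - Real.log n :=
      Real.log_div (by positivity) (by positivity)
    have h1 : (n : ℝ) * (Real.log ((n : ℝ) + 1) - Real.log n) ≤ 1 := by
      rw [← hd]
      have := Real.log_le_sub_one_of_pos (x := ((n : ℝ) + 1) / n) (by positivity)
      calc (n : ℝ) * Real.log (((n : ℝ) + 1) / n) ≤ n * (((n : ℝ) + 1) / n - 1) := by gcongr
        _ = 1 := by field_simp; ring
    have h2 : 1 ≤ ((n : ℝ) + 1) * (Real.log ((n : ℝ) + 1) - Real.log n) := by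
      rw [← hd]
      have := Real.one_sub_inv_le_log_of_pos (x := ((n : ℝ) + 1) / n) (by positivity)
      calc (1 : ℝ) = ((n : ℝ) + 1) * (1 - (((n : ℝ) + 1) / n)⁻¹) := by field_simp; ring
        _ ≤ _ := by gcongr
    rw [hf]
    push_cast
    constructor <;> nlinarith [ih.1, ih.2]

lemma mul_log_scale {a : ℝ} (ha : 0 < a) (x : ℝ) :
    (a * x) * Real.log (a * x) = a * (x * Real.log x) + a * x * Real.log a := by
  rcases eq_or_ne x 0 with rfl | hx
  · simp
  · rw [Real.log_mul ha.ne' hx]; ring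

lemma C₀_eq (k j : ℕ) : C₀ (k + 2 + 2 * j) (k + 2) =
    (2 : ℝ) ^ (j + 2) * (Nat.factorial (2 * k + 3 * j + 3) : ℝ) * (Nat.factorial (2 * k + 1) : ℝ) /
      ((Nat.factorial (j + 1) : ℝ) * (Nat.factorial (2 * k + 2 * j + 4) : ℝ) *
        (Nat.factorial k : ℝ) ^ 2) := by
  have h1 : (k + 2 + 2 * j - (k + 2)) / 2 = j := by omega
  have h2 : 2 * (k + 2) + 3 * j - 1 = 2 * k + 3 * j + 3 := by omega
  have h3 : 2 * (k + 2) - 3 = 2 * k + 1 := by omega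
  have h4 : 2 * (k + 2) + 2 * j = 2 * k + 2 * j + 4 := by omega
  rw [C₀, if_pos ⟨by omega, by omega, by omega⟩, h1, h2, h3, h4, Nat.add_sub_cancel]

lemma C₀_pos (k j : ℕ) : 0 < C₀ (k + 2 + 2 * j) (k + 2) := by
  rw [C₀_eq]
  positivity

lemma C₀_nonneg (N m : ℕ) : 0 ≤ C₀ N m := by
  unfold C₀
  split_ifs <;> positivity

/-- The quantities `log n!`, up to the common linear term `n`, combine to `N · rate`; the linear
terms cancel because the arguments of the factorials are balanced. -/
lemma entropy_eq (μ₁ m j N : ℝ) (hN : 0 < N) (h : N = m + 2 * j) :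
    j * Real.log 2 + (2 * m + 3 * j) * Real.log (2 * m + 3 * j) + (2 * m) * Real.log (2 * m)
      - j * Real.log j - (2 * m + 2 * j) * Real.log (2 * m + 2 * j) - 2 * (m * Real.log m)
      - μ₁ * m / 2 = N * rate μ₁ (m / N) := by
  have e0 := mul_log_scale (a := 2) (by norm_num) m
  have e1 := mul_log_scale hN ((3 + m / N) / 2)
  have e2 := mul_log_scale hN ((1 - m / N) / 2)
  have e3 := mul_log_scale hN (1 + m / N)
  have a1 : N * ((3 + m / N) / 2) = 2 * m + 3 * j := by field_simp; linarith
  have a2 : N * ((1 - m / N) / 2) = j := by field_simp; linarith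
  have a3 : N * (1 + m / N) = 2 * m + 2 * j := by field_simp; linarith
  have a4 : N * (m / N) = m := by field_simp
  rw [a1] at e1
  rw [a2] at e2
  rw [a3] at e3
  rw [e0, e1, e2, e3]
  have : N * rate μ₁ (m / N) = N * ((1 - m / N) / 2) * Real.log 2
      + N * ((3 + m / N) / 2 * Real.log ((3 + m / N) / 2)) + 2 * (N * (m / N)) * Real.log 2
      - N * ((1 - m / N) / 2 * Real.log ((1 - m / N) / 2))
      - N * ((1 + m / N) * Real.log (1 + m / N)) - μ₁ * (N * (m / N)) / 2 := by
    unfold rate; ring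
  rw [this, a2, a4]
  ring

/-- Uniform first-order asymptotics of the terms of `Θ`: the error is logarithmic in `N`. -/
lemma log_term_bound (μ₁ : ℝ) (k j N : ℕ) (hN : N = k + 2 + 2 * j) :
    |(Real.log (C₀ N (k + 2)) - μ₁ * ((k + 2 : ℕ) : ℝ) / 2)
      - N * rate μ₁ (((k + 2 : ℕ) : ℝ) / N)| ≤ 15 * Real.log (2 * N + 1) + 8 := by
  have hNR : (N : ℝ) = k + 2 + 2 * j := by rw [hN]; push_cast; ring
  have hk : (0 : ℝ) ≤ k := Nat.cast_nonneg k
  have hj : (0 : ℝ) ≤ j := Nat.cast_nonneg j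
  have hL : Real.log (C₀ N (k + 2)) = (j + 2) * Real.log 2
      + Real.log (Nat.factorial (2 * k + 3 * j + 3)) + Real.log (Nat.factorial (2 * k + 1))
      - Real.log (Nat.factorial (j + 1)) - Real.log (Nat.factorial (2 * k + 2 * j + 4))
      - 2 * Real.log (Nat.factorial k) := by
    rw [hN, C₀_eq, Real.log_div (by positivity) (by positivity),
      Real.log_mul (by positivity) (by positivity), Real.log_mul (by positivity) (by positivity),
      Real.log_mul (by positivity) (by positivity), Real.log_mul (by positivity) (by positivity),
      Real.log_pow, Real.log_pow]
    push_cast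
    ring
  have hsucc : ∀ n : ℕ, Real.log (Nat.factorial (n + 1)) =
      Real.log ((n : ℝ) + 1) + Real.log (Nat.factorial n) := by
    intro n
    rw [Nat.factorial_succ]
    push_cast
    exact Real.log_mul (by positivity) (by positivity)
  have hlog : ∀ x : ℝ, 1 ≤ x → x ≤ 2 * N + 1 → 0 ≤ Real.log x ∧ Real.log x ≤ Real.log (2 * N + 1) :=
    fun x h1 h2 => ⟨Real.log_nonneg h1, Real.log_le_log (by linarith) h2⟩
  have f1 := hsucc (2 * k + 3 * j + 3)
  have f2 := hsucc (2 * k + 1)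
  have f3 := hsucc (2 * k + 2)
  have f4 := hsucc (2 * k + 3)
  have f5 := hsucc j
  have f6 := hsucc k
  have f7 := hsucc (k + 1)
  have s1 := stirling_bounds (2 * k + 3 * j + 3 + 1)
  have s2 := stirling_bounds (2 * k + 3 + 1)
  have s3 := stirling_bounds j
  have s4 := stirling_bounds (2 * k + 2 * j + 4)
  have s5 := stirling_bounds (k + 1 + 1)
  have hent := entropy_eq μ₁ (k + 2) j N (by linarith) (by linarith)
  push_cast at *
  rw [show (2 * (k : ℝ) + 3 * j + 3 + 1) = 2 * (k + 2) + 3 * j by ring] at f1 s1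
  rw [show (2 * (k : ℝ) + 3 + 1) = 2 * (k + 2) by ring] at f4 s2
  rw [show (2 * (k : ℝ) + 2 * j + 4) = 2 * (k + 2) + 2 * j by ring] at s4
  rw [show (k : ℝ) + 1 + 1 = k + 2 by ring] at f7 s5
  have l1 := hlog (2 * (k + 2) + 3 * j) (by linarith) (by linarith)
  have l2 := hlog (2 * k + 1 + 1) (by linarith) (by linarith)
  have l3 := hlog (2 * k + 2 + 1) (by linarith) (by linarith)
  have l4 := hlog (2 * (k + 2)) (by linarith) (by linarith)
  have l5 := hlog (j + 1) (by linarith) (by linarith)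
  have l6 := hlog (k + 1) (by linarith) (by linarith)
  have l7 := hlog (k + 2) (by linarith) (by linarith)
  have t1 := hlog (2 * (k + 2) + 3 * j + 1) (by linarith) (by linarith)
  have t2 := hlog (2 * (k + 2) + 1) (by linarith) (by linarith)
  have t4 := hlog (2 * (k + 2) + 2 * j + 1) (by linarith) (by linarith)
  have t5 := hlog (k + 2 + 1) (by linarith) (by linarith)
  have two0 : 0 ≤ Real.log 2 := Real.log_nonneg (by norm_num)
  have two1 : Real.log 2 ≤ 1 := by
    have := Real.log_two_lt_d9
    linarith
  rw [hL, ← hent, abs_le]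
  constructor <;> linarith [s1.1, s1.2, s2.1, s2.2, s3.1, s3.2, s4.1, s4.2, s5.1, s5.2,
    l1.1, l1.2, l2.1, l2.2, l3.1, l3.2, l4.1, l4.2, l5.1, l5.2, l6.1, l6.2, l7.1, l7.2,
    t1.2, t2.2, t4.2, t5.2]

/-! ### The variational formula -/

lemma rate_continuous (μ₁ : ℝ) : Continuous (rate μ₁) := by
  unfold rate
  have h1 : Continuous fun β : ℝ => (3 + β) / 2 * Real.log ((3 + β) / 2) :=
    Real.continuous_mul_log.comp (by fun_prop : Continuous fun β : ℝ => (3 + β) / 2)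
  have h2 : Continuous fun β : ℝ => (1 - β) / 2 * Real.log ((1 - β) / 2) :=
    Real.continuous_mul_log.comp (by fun_prop : Continuous fun β : ℝ => (1 - β) / 2)
  have h3 : Continuous fun β : ℝ => (1 + β) * Real.log (1 + β) :=
    Real.continuous_mul_log.comp (by fun_prop : Continuous fun β : ℝ => 1 + β)
  fun_prop

lemma rate_zero (μ₁ : ℝ) : rate μ₁ 0 = 1 / 2 * Real.log (27 / 2) := by
  have e1 : Real.log (27 / 2) = 3 * Real.log 3 - Real.log 2 := by
    rw [Real.log_div (by norm_num) (by norm_num), show (27 : ℝ) = 3 ^ 3 by norm_num, Real.log_pow]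
    norm_num
  have e2 : Real.log (3 / 2) = Real.log 3 - Real.log 2 := Real.log_div (by norm_num) (by norm_num)
  have e3 : Real.log (1 / 2) = - Real.log 2 := by
    rw [one_div, Real.log_inv]
  simp only [rate, add_zero, sub_zero, e1, e2, e3, Real.log_one]
  ring

lemma g_eq {t : ℝ} (h0 : 0 ≤ t) (h1 : t < 1) :
    g t = (3 + t) * (1 - t) / (3 * (1 + t) ^ 2) := by
  have : 1 - t ≠ 0 := by linarith
  have h2 : 1 + t ≠ 0 := by linarith
  have h3 : 1 + 2 * t / (1 - t) = (1 + t) / (1 - t) := by field_simp; ring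
  rw [g, h3]
  field_simp
  ring

lemma g_pos {t : ℝ} (h0 : 0 ≤ t) (h1 : t < 1) : 0 < g t := by
  rw [g_eq h0 h1]
  have : 0 < 1 - t := by linarith
  positivity

lemma g_le_one {t : ℝ} (h0 : 0 ≤ t) (h1 : t < 1) : g t ≤ 1 := by
  rw [g_eq h0 h1, div_le_one (by positivity)]
  nlinarith

lemma rate_hasDerivAt (μ₁ : ℝ) {t : ℝ} (h0 : 0 ≤ t) (h1 : t < 1) :
    HasDerivAt (rate μ₁) (1 / 2 * Real.log (6 * Real.exp (-μ₁) * g t)) t := by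
  have hlin : ∀ (a b : ℝ), HasDerivAt (fun x : ℝ => a + b * x) b t := fun a b => by
    simpa using ((hasDerivAt_id t).const_mul b).const_add a
  have k1 : HasDerivAt (fun x : ℝ => (3 / 2 + 1 / 2 * x) * Real.log (3 / 2 + 1 / 2 * x)) _ t :=
    HasDerivAt.comp (h₂ := fun y => y * Real.log y) t
      (Real.hasDerivAt_mul_log (x := 3 / 2 + 1 / 2 * t) (by linarith)) (hlin _ _)
  have k2 : HasDerivAt (fun x : ℝ => (1 / 2 + (-1 / 2) * x) * Real.log (1 / 2 + (-1 / 2) * x)) _ t :=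
    HasDerivAt.comp (h₂ := fun y => y * Real.log y) t
      (Real.hasDerivAt_mul_log (x := 1 / 2 + (-1 / 2) * t) (by linarith)) (hlin _ _)
  have k3 : HasDerivAt (fun x : ℝ => (1 + 1 * x) * Real.log (1 + 1 * x)) _ t :=
    HasDerivAt.comp (h₂ := fun y => y * Real.log y) t
      (Real.hasDerivAt_mul_log (x := 1 + 1 * t) (by linarith)) (hlin _ _)
  have k := (((hlin (1 / 2 * Real.log 2) (3 / 2 * Real.log 2 - μ₁ / 2)).add k1).sub k2).sub k3
  have e1 : Real.log (6 * Real.exp (-μ₁) * g t) =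
      Real.log 2 + Real.log (3 + t) + Real.log (1 - t) - 2 * Real.log (1 + t) - μ₁ := by
    have p1 : (1 - t) ≠ 0 := by linarith
    have p2 : (3 + t) ≠ 0 := by linarith
    have p3 : (1 + t) ≠ 0 := by linarith
    have : 6 * Real.exp (-μ₁) * g t = 2 * (3 + t) * (1 - t) / (1 + t) ^ 2 * Real.exp (-μ₁) := by
      rw [g_eq h0 h1]; field_simp; ring
    rw [this, Real.log_mul (by positivity) (by positivity), Real.log_div (by positivity)
      (by positivity), Real.log_mul (by positivity) p1, Real.log_mul (by norm_num) p2,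
      Real.log_pow, Real.log_exp]
    push_cast
    ring
  have e2 : Real.log (3 / 2 + 1 / 2 * t) = Real.log (3 + t) - Real.log 2 := by
    rw [← Real.log_div (by linarith) (by norm_num)]; congr 1; ring
  have e3 : Real.log (1 / 2 + (-1 / 2) * t) = Real.log (1 - t) - Real.log 2 := by
    rw [← Real.log_div (by linarith) (by norm_num)]; congr 1; ring
  rw [e2, e3, one_mul] at k
  rw [e1]
  refine (k.congr_deriv ?_).congr_of_eventuallyEq (Eventually.of_forall fun x => ?_)
  · ring
  · have q1 : 3 / 2 + 1 / 2 * x = (3 + x) / 2 := by ring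
    have q2 : 1 / 2 + (-1 / 2) * x = (1 - x) / 2 := by ring
    simp only [rate, Pi.add_apply, Pi.sub_apply, q1, q2, one_mul]
    ring

lemma integral_eq (μ₁ : ℝ) {β : ℝ} (h0 : 0 ≤ β) (h1 : β < 1) :
    ∫ t in (0 : ℝ)..β, Real.log (6 * Real.exp (-μ₁) * g t) = 2 * (rate μ₁ β - rate μ₁ 0) := by
  have hd : ∀ t ∈ Set.uIcc 0 β,
      HasDerivAt (fun x => 2 * rate μ₁ x) (Real.log (6 * Real.exp (-μ₁) * g t)) t := by
    intro t ht
    rw [Set.uIcc_of_le h0] at ht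
    have := (rate_hasDerivAt μ₁ ht.1 (ht.2.trans_lt h1)).const_mul 2
    exact this.congr_deriv (by ring)
  rw [intervalIntegral.integral_eq_sub_of_hasDerivAt hd]
  · ring
  · apply ContinuousOn.intervalIntegrable
    rw [Set.uIcc_of_le h0]
    apply ContinuousOn.log
    · have : ContinuousOn (fun t : ℝ => (3 + t) * (1 - t) / (3 * (1 + t) ^ 2)) (Set.Icc 0 β) := by
        apply ContinuousOn.div (by fun_prop) (by fun_prop)
        intro t ht
        have := ht.1
        positivity
      refine continuousOn_const.mul (this.congr ?_)
      intro t ht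
      exact g_eq ht.1 (ht.2.trans_lt h1)
    · intro t ht
      have := g_pos ht.1 (ht.2.trans_lt h1)
      positivity

lemma supTerm_bddAbove (μ₁ : ℝ) : BddAbove (Set.range fun β : Set.Ico (0 : ℝ) 1 =>
    ∫ t in (0 : ℝ)..(β : ℝ), Real.log (6 * Real.exp (-μ₁) * g t)) := by
  obtain ⟨C, hC⟩ := (isCompact_Icc (a := (0 : ℝ)) (b := 1)).bddAbove_image
    (rate_continuous μ₁).continuousOn
  refine ⟨2 * (C - rate μ₁ 0), ?_⟩
  rintro _ ⟨β, rfl⟩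
  have := hC (Set.mem_image_of_mem (rate μ₁) ⟨β.2.1, β.2.2.le⟩)
  simp only [integral_eq μ₁ β.2.1 β.2.2]
  linarith

lemma rate_le_of_lt (μ₁ : ℝ) {β : ℝ} (h0 : 0 ≤ β) (h1 : β < 1) :
    rate μ₁ β ≤ rate μ₁ 0 + 1 / 2 * supTerm μ₁ := by
  have : ∫ t in (0 : ℝ)..β, Real.log (6 * Real.exp (-μ₁) * g t) ≤ supTerm μ₁ :=
    le_ciSup (supTerm_bddAbove μ₁) (⟨β, h0, h1⟩ : Set.Ico (0 : ℝ) 1)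
  rw [integral_eq μ₁ h0 h1] at this
  linarith

lemma rate_le (μ₁ : ℝ) {β : ℝ} (h0 : 0 ≤ β) (h1 : β ≤ 1) :
    rate μ₁ β ≤ rate μ₁ 0 + 1 / 2 * supTerm μ₁ := by
  -- The supremum runs over `[0, 1)`; the endpoint `1` (that is, `m = N`) follows by continuity.
  have hc : closure (Set.Ico (0 : ℝ) 1) = Set.Icc 0 1 := closure_Ico (by norm_num)
  have hβ : β ∈ closure (Set.Ico (0 : ℝ) 1) := by rw [hc]; exact ⟨h0, h1⟩
  exact closure_minimal (t := {x | rate μ₁ x ≤ rate μ₁ 0 + 1 / 2 * supTerm μ₁})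
    (fun x hx => rate_le_of_lt μ₁ hx.1 hx.2)
    (isClosed_le (rate_continuous μ₁) continuous_const) hβ

lemma exists_rate_gt (μ₁ : ℝ) {a : ℝ} (ha : a < rate μ₁ 0 + 1 / 2 * supTerm μ₁) :
    ∃ β : ℝ, 0 ≤ β ∧ β < 1 ∧ a < rate μ₁ β := by
  have : Nonempty (Set.Ico (0 : ℝ) 1) := ⟨⟨0, by norm_num⟩⟩
  have : 2 * (a - rate μ₁ 0) < supTerm μ₁ := by linarith
  obtain ⟨β, hβ⟩ := exists_lt_of_lt_ciSup this
  rw [integral_eq μ₁ β.2.1 β.2.2] at hβ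
  exact ⟨β, β.2.1, β.2.2, by linarith⟩

lemma supTerm_nonneg (μ₁ : ℝ) : 0 ≤ supTerm μ₁ := by
  have := rate_le μ₁ le_rfl zero_le_one
  linarith

lemma supTerm_eq_zero {μ₁ : ℝ} (h : Real.log 6 ≤ μ₁) : supTerm μ₁ = 0 := by
  apply le_antisymm _ (supTerm_nonneg μ₁)
  have : Nonempty (Set.Ico (0 : ℝ) 1) := ⟨⟨0, by norm_num⟩⟩
  apply ciSup_le
  intro β
  rw [← neg_nonneg, ← intervalIntegral.integral_neg]
  apply intervalIntegral.integral_nonneg β.2.1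
  intro t ht
  have ht1 : t < 1 := ht.2.trans_lt β.2.2
  have hg := g_pos ht.1 ht1
  rw [neg_nonneg]
  apply Real.log_nonpos (by positivity)
  have h6 : 6 * Real.exp (-μ₁) ≤ 1 := by
    rw [Real.exp_neg, ← div_eq_mul_inv, div_le_one (Real.exp_pos _)]
    exact (Real.log_le_iff_le_exp (by norm_num)).1 h
  exact mul_le_one₀ h6 hg.le (g_le_one ht.1 ht1)

lemma supTerm_pos {μ₁ : ℝ} (h : μ₁ < Real.log 6) : 0 < supTerm μ₁ := by
  by_contra! hs
  have hd := rate_hasDerivAt μ₁ le_rfl zero_lt_one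
  have hg : g 0 = 1 := by simp [g]
  rw [hg, mul_one, Real.log_mul (by norm_num) (Real.exp_pos _).ne', Real.log_exp,
    hasDerivAt_iff_tendsto_slope] at hd
  -- Otherwise all right difference quotients of `rate` at `0` would be nonpositive.
  have hd' := hd.mono_left (nhdsWithin_mono 0 (fun x (hx : x ∈ Set.Ioi (0 : ℝ)) => ne_of_gt hx))
  have : 1 / 2 * (Real.log 6 + -μ₁) ≤ 0 := by
    apply le_of_tendsto hd'
    filter_upwards [Ioo_mem_nhdsGT (zero_lt_one (α := ℝ))] with x hx
    have := rate_le_of_lt μ₁ hx.1.le hx.2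
    rw [slope_def_field]
    exact div_nonpos_of_nonpos_of_nonneg (by linarith) (by linarith [hx.1])
  linarith

/-! ### The limit -/

lemma term_upper (μ₁ : ℝ) (N m : ℕ) (hN : 2 ≤ N) :
    Real.exp (-μ₁ * m / 2) * C₀ N m ≤
      Real.exp (N * (rate μ₁ 0 + 1 / 2 * supTerm μ₁) + 15 * Real.log (2 * N + 1) + 8) := by
  by_cases h : 2 ≤ m ∧ m ≤ N ∧ N % 2 = m % 2
  · obtain ⟨k, rfl⟩ : ∃ k, m = k + 2 := ⟨m - 2, by omega⟩
    obtain ⟨j, hj⟩ : ∃ j, N = k + 2 + 2 * j := ⟨(N - (k + 2)) / 2, by omega⟩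
    have hpos : 0 < C₀ N (k + 2) := hj ▸ C₀_pos k j
    have hb := (abs_le.1 (log_term_bound μ₁ k j N hj)).2
    have hN0 : (0 : ℝ) < N := by exact_mod_cast (by omega : 0 < N)
    have hr := rate_le μ₁ (β := ((k + 2 : ℕ) : ℝ) / N) (by positivity)
      ((div_le_one hN0).2 (by exact_mod_cast h.2.1))
    have hr' := mul_le_mul_of_nonneg_left hr hN0.le
    rw [← Real.exp_log hpos, ← Real.exp_add]
    apply Real.exp_le_exp.2
    linarith
  · rw [C₀, if_neg h, mul_zero]
    positivity

lemma log_Θ_upper (μ₁ : ℝ) (N : ℕ) (hN : 2 ≤ N) (hΘ : 0 < Θ μ₁ N) :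
    Real.log (Θ μ₁ N) ≤
      N * (rate μ₁ 0 + 1 / 2 * supTerm μ₁) + (16 * Real.log (2 * N + 1) + 8) := by
  have h : Θ μ₁ N ≤ (N + 1) *
      Real.exp (N * (rate μ₁ 0 + 1 / 2 * supTerm μ₁) + 15 * Real.log (2 * N + 1) + 8) := by
    have := Finset.sum_le_card_nsmul (Finset.range (N + 1))
      (fun m : ℕ => Real.exp (-μ₁ * m / 2) * C₀ N m) _ (fun m _ => term_upper μ₁ N m hN)
    rw [Finset.card_range, nsmul_eq_mul] at this
    push_cast at this
    exact this
  have h2 := Real.log_le_log hΘ h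
  rw [Real.log_mul (by positivity) (Real.exp_pos _).ne', Real.log_exp] at h2
  have : Real.log ((N : ℝ) + 1) ≤ Real.log (2 * N + 1) :=
    Real.log_le_log (by positivity) (by linarith [Nat.cast_nonneg (α := ℝ) N])
  linarith

/-- A single term already bounds `Θ` from below. -/
lemma log_Θ_lower (μ₁ : ℝ) (k j N : ℕ) (hN : N = k + 2 + 2 * j) :
    0 < Θ μ₁ N ∧ N * rate μ₁ (((k + 2 : ℕ) : ℝ) / N) - (16 * Real.log (2 * N + 1) + 8) ≤
      Real.log (Θ μ₁ N) := by
  have hpos : 0 < C₀ N (k + 2) := hN ▸ C₀_pos k j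
  have hs : Real.exp (-μ₁ * ((k + 2 : ℕ) : ℝ) / 2) * C₀ N (k + 2) ≤ Θ μ₁ N :=
    Finset.single_le_sum (f := fun m : ℕ => Real.exp (-μ₁ * m / 2) * C₀ N m)
      (fun m _ => mul_nonneg (Real.exp_pos _).le (C₀_nonneg N m))
      (Finset.mem_range.2 (by omega))
  have ht : 0 < Real.exp (-μ₁ * ((k + 2 : ℕ) : ℝ) / 2) * C₀ N (k + 2) :=
    mul_pos (Real.exp_pos _) hpos
  refine ⟨ht.trans_le hs, ?_⟩
  have h2 := Real.log_le_log ht hs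
  rw [Real.log_mul (Real.exp_pos _).ne' hpos.ne', Real.log_exp] at h2
  have hb := (abs_le.1 (log_term_bound μ₁ k j N hN)).1
  have : 0 ≤ Real.log (2 * (N : ℝ) + 1) :=
    Real.log_nonneg (by linarith [Nat.cast_nonneg (α := ℝ) N])
  linarith

lemma error_tendsto :
    Tendsto (fun N : ℕ => (16 * Real.log (2 * (N : ℝ) + 1) + 8) / N) atTop (nhds 0) := by
  have h1 : Tendsto (fun N : ℕ => 2 * (N : ℝ) + 1) atTop atTop :=
    tendsto_atTop_add_const_right _ _
      (tendsto_natCast_atTop_atTop.const_mul_atTop (by norm_num))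
  have h2 := (Real.tendsto_pow_log_div_mul_add_atTop (1 / 2) (-1 / 2) 1 (by norm_num)).comp h1
  have h3 := (h2.const_mul 16).add ((tendsto_const_div_atTop_nhds_zero_nat (8 : ℝ)))
  simp only [mul_zero, add_zero] at h3
  refine h3.congr (fun N => ?_)
  simp only [Function.comp, pow_one]
  rw [show 1 / 2 * (2 * (N : ℝ) + 1) + -1 / 2 = N by ring]
  ring

/-- Boundary lengths `m` of the right parity with `m / N → β` exist; the shift by `1` in `j`
keeps `m ≥ 2` when `β = 0`. -/
lemma exists_seq {β : ℝ} (h0 : 0 ≤ β) (h1 : β ≤ 1) :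
    ∃ k j : ℕ → ℕ, (∀ N, 2 ≤ N → N = k N + 2 + 2 * j N) ∧
      Tendsto (fun N : ℕ => ((k N + 2 : ℕ) : ℝ) / N) atTop (nhds β) := by
  have hc : 0 ≤ (1 - β) / 2 := by linarith
  set j : ℕ → ℕ := fun N => ⌊(1 - β) / 2 * (N : ℝ)⌋₊ - 1 with hj
  have hle : ∀ N, 2 ≤ N → 2 * j N + 2 ≤ N := by
    intro N hN
    have h2 : (⌊(1 - β) / 2 * (N : ℝ)⌋₊ : ℝ) ≤ (1 - β) / 2 * N := Nat.floor_le (by positivity)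
    have h3 : (⌊(1 - β) / 2 * (N : ℝ)⌋₊ : ℝ) * 2 ≤ N := by
      nlinarith [Nat.cast_nonneg (α := ℝ) N]
    have h4 : ⌊(1 - β) / 2 * (N : ℝ)⌋₊ * 2 ≤ N := by exact_mod_cast h3
    simp only [hj]
    omega
  refine ⟨fun N => N - 2 * j N - 2, j, fun N hN => by have := hle N hN; grind, ?_⟩
  have hA : Tendsto (fun N : ℕ => (j N : ℝ) / N) atTop (nhds ((1 - β) / 2)) := by
    have hf : Tendsto (fun N : ℕ => (⌊(1 - β) / 2 * (N : ℝ)⌋₊ : ℝ) / N) atTop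
        (nhds ((1 - β) / 2)) :=
      (tendsto_nat_floor_mul_div_atTop hc).comp tendsto_natCast_atTop_atTop
    have hf' := hf.sub (tendsto_const_div_atTop_nhds_zero_nat (1 : ℝ))
    rw [sub_zero] at hf'
    refine tendsto_of_tendsto_of_tendsto_of_le_of_le hf' hf (fun N => ?_) (fun N => ?_)
    · simp only [← sub_div]
      gcongr
      have : ⌊(1 - β) / 2 * (N : ℝ)⌋₊ ≤ j N + 1 := by simp only [hj]; omega
      have : (⌊(1 - β) / 2 * (N : ℝ)⌋₊ : ℝ) ≤ j N + 1 := by exact_mod_cast this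
      linarith
    · simp only [hj]
      gcongr
      omega
  have hB := (hA.const_mul 2).const_sub 1
  rw [show 1 - 2 * ((1 - β) / 2) = β by ring] at hB
  refine hB.congr' ?_
  filter_upwards [eventually_ge_atTop 2] with N hN
  have h2 := hle N hN
  have h3 : N - 2 * j N - 2 + 2 = N - 2 * j N := by omega
  have hN0 : (0 : ℝ) < N := by exact_mod_cast (by omega : 0 < N)
  have h5 : ((N - 2 * j N : ℕ) : ℝ) = N - 2 * j N := by
    rw [Nat.cast_sub (Nat.le_of_add_right_le h2)]
    push_cast
    rfl
  rw [h3, h5, sub_div, div_self hN0.ne', mul_div_assoc]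

/-- The free energy limit `lim_N (1/N)·ln(e^{−3μ₁N/2}Θ_N(μ₁))` exists and equals `F(μ₁)`;
the supremum vanishes iff `μ₁ ≥ ln 6`, so `F(μ₁) = −(3/2)μ₁ + (1/2)ln(27/2)` for
`μ₁ ≥ ln 6` and `F(μ₁)` is strictly larger for `μ₁ < ln 6` (phase transition at `ln 6`). -/
theorem free_energy_limit (μ₁ : ℝ) :
    Tendsto (fun N : ℕ =>
        (1 / (N : ℝ)) * Real.log (Real.exp (-3 * μ₁ * N / 2) * Θ μ₁ N))
      atTop (nhds (freeEnergy μ₁)) ∧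
    (supTerm μ₁ = 0 ↔ Real.log 6 ≤ μ₁) ∧
    (Real.log 6 ≤ μ₁ → freeEnergy μ₁ = -(3 / 2) * μ₁ + (1 / 2) * Real.log (27 / 2)) ∧
    (μ₁ < Real.log 6 → -(3 / 2) * μ₁ + (1 / 2) * Real.log (27 / 2) < freeEnergy μ₁) := by
  refine ⟨?_, ⟨fun h => ?_, supTerm_eq_zero⟩, fun h => ?_, fun h => ?_⟩
  · have hF : freeEnergy μ₁ = -(3 / 2) * μ₁ + (rate μ₁ 0 + 1 / 2 * supTerm μ₁) := by
      rw [freeEnergy, rate_zero]; ring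
    have hval : ∀ N : ℕ, 2 ≤ N → 0 < Θ μ₁ N →
        (1 / (N : ℝ)) * Real.log (Real.exp (-3 * μ₁ * N / 2) * Θ μ₁ N) =
          -(3 / 2) * μ₁ + Real.log (Θ μ₁ N) / N := by
      intro N hN hΘ
      have : (0 : ℝ) < N := by exact_mod_cast (by omega : 0 < N)
      rw [Real.log_mul (Real.exp_pos _).ne' hΘ.ne', Real.log_exp]
      field_simp
    obtain ⟨k₀, j₀, hk₀, -⟩ := exists_seq (β := 0) le_rfl zero_le_one
    have hΘ : ∀ N, 2 ≤ N → 0 < Θ μ₁ N := fun N hN =>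
      (log_Θ_lower μ₁ (k₀ N) (j₀ N) N (hk₀ N hN)).1
    rw [tendsto_order, hF]
    constructor
    · intro a ha
      obtain ⟨β, hβ0, hβ1, hβ⟩ := exists_rate_gt μ₁ (a := a + 3 / 2 * μ₁) (by linarith)
      obtain ⟨k, j, hkj, hlim⟩ := exists_seq hβ0 hβ1.le
      have hl : Tendsto (fun N : ℕ => -(3 / 2) * μ₁ + rate μ₁ (((k N + 2 : ℕ) : ℝ) / N)
          - (16 * Real.log (2 * (N : ℝ) + 1) + 8) / N) atTop
          (nhds (-(3 / 2) * μ₁ + rate μ₁ β - 0)) :=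
        ((((rate_continuous μ₁).tendsto β).comp hlim).const_add _).sub error_tendsto
      filter_upwards [hl.eventually_const_lt (u := a) (by linarith), eventually_ge_atTop 2]
        with N h1 h2
      have hN0 : (0 : ℝ) < N := by exact_mod_cast (by omega : 0 < N)
      rw [hval N h2 (hΘ N h2)]
      have h3 := div_le_div_of_nonneg_right (log_Θ_lower μ₁ (k N) (j N) N (hkj N h2)).2 hN0.le
      rw [sub_div, mul_div_cancel_left₀ _ hN0.ne'] at h3
      linarith
    · intro a ha
      have hl : Tendsto (fun N : ℕ => -(3 / 2) * μ₁ + (rate μ₁ 0 + 1 / 2 * supTerm μ₁)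
          + (16 * Real.log (2 * (N : ℝ) + 1) + 8) / N) atTop
          (nhds (-(3 / 2) * μ₁ + (rate μ₁ 0 + 1 / 2 * supTerm μ₁) + 0)) :=
        error_tendsto.const_add _
      filter_upwards [hl.eventually_lt_const (u := a) (by linarith), eventually_ge_atTop 2]
        with N h1 h2
      have hN0 : (0 : ℝ) < N := by exact_mod_cast (by omega : 0 < N)
      rw [hval N h2 (hΘ N h2)]
      have h3 := div_le_div_of_nonneg_right (log_Θ_upper μ₁ N h2 (hΘ N h2)) hN0.le
      rw [add_div, mul_div_cancel_left₀ _ hN0.ne'] at h3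
      linarith
  · by_contra! hlt
    exact (supTerm_pos hlt).ne' h
  · rw [freeEnergy, supTerm_eq_zero h]; ring
  · have := supTerm_pos h
    rw [freeEnergy]
    linarith
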